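/- Let P₁, P₂, P₃ ∈ SL(2,ℂ) generate an irreducible subgroup 𝒫, set P₀ = Id, and let T be the 4×4 Gram matrix T_{ij} = (1/2)trace(Pᵢ·adj(Pⱼ)). Then there exists C ∈ SL(2,ℂ) with C·𝒫·C⁻¹ ⊆ SU(2) if and only if T is real and positive semidefinite. -/

import Mathlib

open Matrix

/-!
The determinant is the quadratic form of `⟨x, y⟩`, and `SU(2)` is the set of determinant one
elements of the real algebra `ℍ` of quaternionic matrices. Hence `T` is real and positive
semidefinite exactly when the determinant is real and nonnegative on the real span `W` of the `Pᵢ`.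
This holds when `W` is conjugate into `ℍ`.

Conversely, suppose the determinant is nonnegative on `W`. By the Cauchy–Schwarz argument, `X ∈ W`
with `det X = 0` is orthogonal to `W`, so every element of `W` preserves the line `ker X` unless
`X = 0`: by irreducibility, `W` is positive definite. Irreducibility also provides `A, B ∈ W` such
that `1, A, B` are orthonormal. Then `A² = B² = -1` and `AB = -BA`, so some `C ∈ SL(2, ℂ)`
conjugates `A, B` to the standard quaternion units `i, j`. The component of `C X C⁻¹` orthogonal to
`1, i, j` is `z k` with `z ∈ ℂ`, and its determinant `z²` is nonnegative, so `z` is real.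
-/

open scoped MatrixGroups ComplexOrder

section DetPairing

variable {K : Type*} [Field K]

/-- The symmetric bilinear form `⟨X, Y⟩ = (1/2) trace (X adj Y)` on `2 × 2` matrices, whose
quadratic form is the determinant when `2 ≠ 0`. -/
def detPairing : LinearMap.BilinForm K (Matrix (Fin 2) (Fin 2) K) :=
  LinearMap.mk₂ K (fun X Y => (1 / 2) * (X * Y.adjugate).trace)
    (fun X X' Y => by rw [Matrix.add_mul, trace_add, mul_add])
    (fun c X Y => by rw [Matrix.smul_mul, trace_smul, smul_eq_mul, smul_eq_mul, mul_left_comm])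
    (fun X Y Y' => by simp [adjugate_fin_two, trace_fin_two, mul_apply, Fin.sum_univ_two]; ring)
    (fun c X Y => by simp [adjugate_fin_two, trace_fin_two, mul_apply, Fin.sum_univ_two]; ring)

lemma detPairing_apply (X Y : Matrix (Fin 2) (Fin 2) K) :
    detPairing X Y = (1 / 2) * (X * Y.adjugate).trace := rfl

lemma detPairing_comm (X Y : Matrix (Fin 2) (Fin 2) K) : detPairing X Y = detPairing Y X := by
  rw [detPairing_apply, detPairing_apply]
  congr 1
  simp [adjugate_fin_two, trace_fin_two, mul_apply, Fin.sum_univ_two]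
  ring

variable [NeZero (2 : K)]

lemma detPairing_self (X : Matrix (Fin 2) (Fin 2) K) : detPairing X X = X.det := by
  simp [detPairing_apply, mul_adjugate, NeZero.ne (2 : K), mul_comm X.det]

lemma det_add_eq_detPairing (X Y : Matrix (Fin 2) (Fin 2) K) :
    (X + Y).det = X.det + 2 * detPairing X Y + Y.det := by
  simp only [← detPairing_self, map_add, LinearMap.add_apply, detPairing_comm Y X]
  ring

lemma mul_adjugate_add_mul_adjugate (X Y : Matrix (Fin 2) (Fin 2) K) :
    X * Y.adjugate + Y * X.adjugate = (2 * detPairing X Y) • 1 := by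
  rw [detPairing_apply, ← mul_assoc, mul_one_div_cancel (NeZero.ne 2), one_mul]
  ext i j
  fin_cases i <;> fin_cases j <;>
    simp [adjugate_fin_two, trace_fin_two, mul_apply, Fin.sum_univ_two] <;> ring

lemma adjugate_eq_neg {A : Matrix (Fin 2) (Fin 2) K} (hA : detPairing A 1 = 0) :
    A.adjugate = -A := by
  have h := mul_adjugate_add_mul_adjugate A 1
  rw [hA, adjugate_one, mul_one, one_mul, mul_zero, zero_smul] at h
  exact eq_neg_of_add_eq_zero_right h

lemma mul_self_eq_neg_one {A : Matrix (Fin 2) (Fin 2) K} (hA : detPairing A 1 = 0)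
    (hdet : A.det = 1) : A * A = -1 := by
  have h := mul_adjugate A
  rwa [adjugate_eq_neg hA, hdet, one_smul, mul_neg, neg_eq_iff_eq_neg] at h

lemma mul_eq_neg_mul_of_orthogonal {A B : Matrix (Fin 2) (Fin 2) K} (hA : detPairing A 1 = 0)
    (hB : detPairing B 1 = 0) (hAB : detPairing A B = 0) : A * B = -(B * A) := by
  have h := mul_adjugate_add_mul_adjugate A B
  rw [adjugate_eq_neg hA, adjugate_eq_neg hB, hAB, mul_zero, zero_smul, mul_neg, mul_neg,
    ← neg_add, neg_eq_zero] at h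
  exact eq_neg_of_add_eq_zero_left h

lemma det_sum_smul {ι : Type*} [Fintype ι] (P : ι → Matrix (Fin 2) (Fin 2) K) (v : ι → K) :
    (∑ i, v i • P i).det = ∑ i, ∑ j, v i * detPairing (P i) (P j) * v j := by
  simp only [← detPairing_self, map_sum, LinearMap.sum_apply, map_smul, LinearMap.smul_apply,
    smul_eq_mul, Finset.mul_sum]
  rw [Finset.sum_comm]
  exact Finset.sum_congr rfl fun i _ => Finset.sum_congr rfl fun j _ => by ring

end DetPairing

section SpecialLinear

variable {n R K : Type*} [Fintype n] [DecidableEq n] [CommRing R]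

/-- Conjugation `X ↦ C X C⁻¹` of matrices by `C ∈ SL(n, R)`. -/
def slConj (C : SpecialLinearGroup n R) : Matrix n n R →ₗ[R] Matrix n n R :=
  LinearMap.mulLeftRight R ((C : Matrix n n R), ((C⁻¹ : SpecialLinearGroup n R) : Matrix n n R))

lemma slConj_apply (C : SpecialLinearGroup n R) (X : Matrix n n R) :
    slConj C X = C * X * (C⁻¹ : SpecialLinearGroup n R) := rfl

lemma slConj_one (C : SpecialLinearGroup n R) : slConj C 1 = 1 := by
  rw [slConj_apply, mul_one]
  exact congrArg Subtype.val (mul_inv_cancel C)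

lemma det_slConj (C : SpecialLinearGroup n R) (X : Matrix n n R) : (slConj C X).det = X.det := by
  rw [slConj_apply, det_mul, det_mul, C.det_coe, (C⁻¹).det_coe, one_mul, mul_one]

lemma exists_slConj_eq_of_intertwining [Nonempty n] [Field K] [IsAlgClosed K] {M : Matrix n n K}
    (hM : M.det ≠ 0) :
    ∃ C : SpecialLinearGroup n K, ∀ A D : Matrix n n K, A * M = M * D → slConj C A = D := by
  obtain ⟨t, ht⟩ := IsAlgClosed.exists_pow_nat_eq M.det⁻¹ (Fintype.card_pos (α := n))
  obtain ⟨g, hg⟩ : ∃ g : SpecialLinearGroup n K, (g : Matrix n n K) = t • M :=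
    ⟨⟨t • M, by rw [det_smul, ht, inv_mul_cancel₀ hM]⟩, rfl⟩
  have hinv : ((g⁻¹ : SpecialLinearGroup n K) : Matrix n n K) * g = 1 :=
    congrArg Subtype.val (inv_mul_cancel g)
  refine ⟨g⁻¹, fun A D hAD => ?_⟩
  calc slConj g⁻¹ A = (g⁻¹ : SpecialLinearGroup n K) * (A * g) := by
        rw [slConj_apply, inv_inv, mul_assoc]
    _ = (g⁻¹ : SpecialLinearGroup n K) * (g * D) := by
        rw [hg, Matrix.mul_smul, hAD, Matrix.smul_mul]
    _ = D := by rw [← mul_assoc, hinv, one_mul]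

lemma detPairing_slConj [Field K] [NeZero (2 : K)] (C : SL(2, K)) (X Y : Matrix (Fin 2) (Fin 2) K) :
    detPairing (slConj C X) (slConj C Y) = detPairing X Y := by
  have h := det_slConj C (X + Y)
  rw [map_add, det_add_eq_detPairing, det_add_eq_detPairing, det_slConj, det_slConj] at h
  exact mul_left_cancel₀ (NeZero.ne (2 : K)) (by linear_combination h)

/-- The matrices of determinant one in an algebra `𝒜` of matrices, as a group; stability of `𝒜`
under the adjugate provides the inverses. -/
def specialLinearSubgroup [CommRing K] [Algebra R K] (𝒜 : Subalgebra R (Matrix n n K))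
    (hadj : ∀ X ∈ 𝒜, X.adjugate ∈ 𝒜) : Subgroup (SpecialLinearGroup n K) where
  carrier := {g | (g : Matrix n n K) ∈ 𝒜}
  mul_mem' hg hh := 𝒜.mul_mem hg hh
  one_mem' := 𝒜.one_mem
  inv_mem' {g} hg := hadj g hg

end SpecialLinear

section Eigenvectors

/-- The algebra of all matrices that have `v` as an eigenvector. -/
def eigenvectorSubalgebra {n K : Type*} [Fintype n] [DecidableEq n] [CommRing K] (v : n → K) :
    Subalgebra K (Matrix n n K) where
  carrier := {X | ∃ μ : K, X *ᵥ v = μ • v}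
  mul_mem' := by
    rintro X Y ⟨a, ha⟩ ⟨b, hb⟩
    exact ⟨a * b, by rw [← mulVec_mulVec, hb, mulVec_smul, ha, smul_smul, mul_comm]⟩
  add_mem' := by
    rintro X Y ⟨a, ha⟩ ⟨b, hb⟩
    exact ⟨a + b, by rw [add_mulVec, ha, hb, add_smul]⟩
  algebraMap_mem' r := ⟨r, by rw [Algebra.algebraMap_eq_smul_one, smul_mulVec, one_mulVec]⟩

variable {K : Type*} [Field K]

lemma exists_smul_eq_of_mulVec_eq_zero {X : Matrix (Fin 2) (Fin 2) K} {v w : Fin 2 → K}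
    (hX : X ≠ 0) (hv : v ≠ 0) (hXv : X *ᵥ v = 0) (hXw : X *ᵥ w = 0) : ∃ μ : K, μ • v = w := by
  by_contra! h
  let b := basisOfLinearIndependentOfCardEqFinrank ((LinearIndependent.pair_iff' hv).mpr h)
    (by simp)
  have hXlin : X.mulVecLin = 0 :=
    b.ext (Fin.forall_fin_two.mpr ⟨by simpa [b] using hXv, by simpa [b] using hXw⟩)
  exact hX (toLin'.injective (by rw [map_zero, toLin'_apply', hXlin]))

variable [NeZero (2 : K)]

lemma adjugate_mem_eigenvectorSubalgebra {v : Fin 2 → K} {X : Matrix (Fin 2) (Fin 2) K}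
    (hX : X ∈ eigenvectorSubalgebra v) : X.adjugate ∈ eigenvectorSubalgebra v := by
  have h := mul_adjugate_add_mul_adjugate 1 X
  rw [adjugate_one, one_mul, mul_one, ← eq_sub_iff_add_eq] at h
  rw [h]
  exact sub_mem (Subalgebra.smul_mem _ (one_mem _) _) hX

lemma exists_common_eigenvector_of_isotropic {X : Matrix (Fin 2) (Fin 2) K} (hX : X ≠ 0)
    (hdet : X.det = 0) (htr : detPairing X 1 = 0) :
    ∃ v ≠ 0, ∀ Y, detPairing X Y = 0 → Y ∈ eigenvectorSubalgebra v := by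
  obtain ⟨v, hv, hXv⟩ := exists_mulVec_eq_zero_iff.mpr hdet
  refine ⟨v, hv, fun Y hY => ?_⟩
  have hswap : X * Y.adjugate = Y * X := by
    have h := mul_adjugate_add_mul_adjugate X Y
    rw [hY, adjugate_eq_neg htr, mul_zero, zero_smul, mul_neg, ← sub_eq_add_neg] at h
    exact sub_eq_zero.mp h
  have hadj : Y.adjugate ∈ eigenvectorSubalgebra v := by
    obtain ⟨μ, hμ⟩ := exists_smul_eq_of_mulVec_eq_zero (w := Y.adjugate *ᵥ v) hX hv hXv
      (by rw [mulVec_mulVec, hswap, ← mulVec_mulVec, hXv, mulVec_zero])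
    exact ⟨μ, hμ.symm⟩
  simpa [adjugate_adjugate'] using adjugate_mem_eigenvectorSubalgebra hadj

end Eigenvectors

section Quaternions

/-- The quaternions in their standard real form `{X | Xᴴ = adj X}` of `M₂(ℂ)`, whose elements of
determinant one form `SU(2)`. -/
def quaternions : Subalgebra ℝ (Matrix (Fin 2) (Fin 2) ℂ) where
  carrier := {X | Xᴴ = X.adjugate}
  mul_mem' {X Y} hX hY := by
    rw [Set.mem_ofPred_eq] at *
    rw [conjTranspose_mul, hX, hY, adjugate_mul_distrib]
  add_mem' {X Y} hX hY := by
    rw [Set.mem_ofPred_eq] at *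
    rw [conjTranspose_add, hX, hY]
    simp [adjugate_fin_two, add_comm]
  algebraMap_mem' r := by
    rw [Set.mem_ofPred_eq, Algebra.algebraMap_eq_smul_one, conjTranspose_smul, conjTranspose_one]
    simp [adjugate_fin_two, one_fin_two]

lemma mem_quaternions_iff {X : Matrix (Fin 2) (Fin 2) ℂ} :
    X ∈ quaternions ↔ Xᴴ = X.adjugate := Iff.rfl

lemma adjugate_mem_quaternions {X : Matrix (Fin 2) (Fin 2) ℂ} (hX : X ∈ quaternions) :
    X.adjugate ∈ quaternions := by
  rw [mem_quaternions_iff] at *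
  rw [adjugate_conjTranspose, hX]

lemma mem_unitaryGroup_iff_conjTranspose_eq_adjugate {n R : Type*} [Fintype n] [DecidableEq n]
    [CommRing R] [StarRing R] {A : Matrix n n R} (hA : A.det = 1) :
    A ∈ unitaryGroup n R ↔ Aᴴ = A.adjugate := by
  have hadj : A * A.adjugate = 1 := by rw [mul_adjugate, hA, one_smul]
  have hadj' : A.adjugate * A = 1 := by rw [adjugate_mul, hA, one_smul]
  rw [mem_unitaryGroup_iff, star_eq_conjTranspose]
  exact ⟨fun h => (left_inv_eq_right_inv hadj' h).symm, fun h => h ▸ hadj⟩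

lemma coe_mem_unitaryGroup_iff_mem_quaternions (g : SL(2, ℂ)) :
    (g : Matrix (Fin 2) (Fin 2) ℂ) ∈ unitaryGroup (Fin 2) ℂ ↔ ↑g ∈ quaternions :=
  mem_unitaryGroup_iff_conjTranspose_eq_adjugate g.det_coe

lemma det_nonneg_of_mem_quaternions {X : Matrix (Fin 2) (Fin 2) ℂ} (hX : X ∈ quaternions) :
    0 ≤ X.det := by
  have h := (posSemidef_self_mul_conjTranspose X).diag_nonneg (i := 0)
  rwa [mem_quaternions_iff.mp hX, mul_adjugate, Matrix.smul_apply, one_apply_eq, smul_eq_mul,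
    mul_one] at h

/-- The quaternion unit `i`. -/
def quaternionI : Matrix (Fin 2) (Fin 2) ℂ := !![Complex.I, 0; 0, -Complex.I]

/-- The quaternion unit `j`. -/
def quaternionJ : Matrix (Fin 2) (Fin 2) ℂ := !![0, 1; -1, 0]

lemma quaternionI_mem : quaternionI ∈ quaternions := by
  rw [mem_quaternions_iff, quaternionI, adjugate_fin_two_of]
  ext i j
  fin_cases i <;> fin_cases j <;> simp

lemma quaternionJ_mem : quaternionJ ∈ quaternions := by
  rw [mem_quaternions_iff, quaternionJ, adjugate_fin_two_of]
  ext i j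
  fin_cases i <;> fin_cases j <;> simp

lemma exists_mulVec_eq_I_smul {A : Matrix (Fin 2) (Fin 2) ℂ} (hA : detPairing A 1 = 0)
    (hdet : A.det = 1) : ∃ v ≠ 0, A *ᵥ v = Complex.I • v := by
  have hchar : (A + (-Complex.I) • 1).det = 0 := by
    rw [det_add_eq_detPairing, map_smul, hA, det_smul, det_one, hdet]
    simp
  obtain ⟨v, hv, h⟩ := exists_mulVec_eq_zero_iff.mpr hchar
  refine ⟨v, hv, ?_⟩
  rwa [add_mulVec, smul_mulVec, one_mulVec, neg_smul, ← sub_eq_add_neg, sub_eq_zero] at h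

/-- The eigenvectors `v` and `-B v` of `A`, for the eigenvalues `i` and `-i`, form the basis in
which `A` and `B` become the quaternion units. -/
lemma exists_slConj_eq_quaternionI_quaternionJ {A B : Matrix (Fin 2) (Fin 2) ℂ}
    (hA : detPairing A 1 = 0) (hB : detPairing B 1 = 0) (hAB : detPairing A B = 0)
    (hAdet : A.det = 1) (hBdet : B.det = 1) :
    ∃ C : SL(2, ℂ), slConj C A = quaternionI ∧ slConj C B = quaternionJ := by
  obtain ⟨v, hv, hAv⟩ := exists_mulVec_eq_I_smul hA hAdet
  obtain ⟨w, hBv⟩ : ∃ w, B *ᵥ v = -w := ⟨-(B *ᵥ v), (neg_neg _).symm⟩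
  have hBw : B *ᵥ w = v := by
    rw [← neg_eq_iff_eq_neg.mpr hBv, mulVec_neg, mulVec_mulVec, mul_self_eq_neg_one hB hBdet,
      neg_mulVec, one_mulVec, neg_neg]
  have hAw : A *ᵥ w = -(Complex.I • w) := by
    rw [← neg_eq_iff_eq_neg.mpr hBv, mulVec_neg, mulVec_mulVec,
      mul_eq_neg_mul_of_orthogonal hA hB hAB, neg_mulVec, ← mulVec_mulVec, hAv, mulVec_smul,
      smul_neg]
  have hli : LinearIndependent ℂ ![v, w] := by
    rw [LinearIndependent.pair_iff' hv]
    rintro a rfl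
    have ha : (2 * Complex.I * a) • v = 0 := by
      rw [mulVec_smul, hAv, ← add_eq_zero_iff_eq_neg] at hAw
      rw [← hAw]
      module
    obtain rfl : a = 0 := by simpa [hv] using ha
    exact hv (by rw [← hBw, zero_smul, mulVec_zero])
  let N : Matrix (Fin 2) (Fin 2) ℂ := (of ![v, w])ᵀ
  have hN : N.det ≠ 0 := by
    rw [det_transpose, ← isUnit_iff_ne_zero, ← isUnit_iff_isUnit_det]
    exact linearIndependent_rows_iff_isUnit.mp hli
  obtain ⟨C, hC⟩ := exists_slConj_eq_of_intertwining hN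
  refine ⟨C, hC A _ ?_, hC B _ ?_⟩
  · ext i j
    have hv_i := congrFun hAv i
    have hw_i := congrFun hAw i
    simp only [mulVec, dotProduct, Fin.sum_univ_two] at hv_i hw_i
    fin_cases j <;> simp [N, quaternionI, mul_apply, hv_i, hw_i, mul_comm]
  · ext i j
    have hv_i := congrFun hBv i
    have hw_i := congrFun hBw i
    simp only [mulVec, dotProduct, Fin.sum_univ_two] at hv_i hw_i
    fin_cases j <;> simp [N, quaternionJ, mul_apply, hv_i, hw_i]

lemma mem_quaternions_of_orthogonal {Y : Matrix (Fin 2) (Fin 2) ℂ} (hone : detPairing Y 1 = 0)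
    (hI : detPairing Y quaternionI = 0) (hJ : detPairing Y quaternionJ = 0) (hdet : 0 ≤ Y.det) :
    Y ∈ quaternions := by
  have htrace : Y 0 0 + Y 1 1 = 0 := by
    simpa [detPairing_apply, trace_fin_two] using hone
  have hdiag : Y 0 0 - Y 1 1 = 0 := by
    have h : Y 0 0 * Complex.I - Y 1 1 * Complex.I = 0 := by
      simpa [detPairing_apply, adjugate_fin_two, quaternionI, trace_fin_two, mul_apply,
        Fin.sum_univ_two, neg_add_eq_zero, sub_eq_zero] using hI
    simpa [← sub_mul] using h
  have hoff : Y 1 0 = Y 0 1 := by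
    have h : Y 0 1 - Y 1 0 = 0 := by
      simpa [detPairing_apply, adjugate_fin_two, quaternionJ, trace_fin_two, mul_apply,
        Fin.sum_univ_two, ← sub_eq_add_neg] using hJ
    exact (sub_eq_zero.mp h).symm
  have h₀ : Y 0 0 = 0 := by linear_combination (htrace + hdiag) / 2
  have h₁ : Y 1 1 = 0 := by linear_combination (htrace - hdiag) / 2
  have hre : (Y 0 1).re = 0 := by
    rw [det_fin_two, h₀, h₁, hoff, zero_mul, zero_sub, ← sq, neg_nonneg] at hdet
    exact Complex.sq_nonpos_iff.mp hdet
  have hconj : starRingEnd ℂ (Y 0 1) = -Y 0 1 := Complex.ext (by simp [hre]) (by simp)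
  rw [mem_quaternions_iff, adjugate_fin_two]
  ext i j
  fin_cases i <;> fin_cases j <;> simp [h₀, h₁, hoff, hconj]

end Quaternions

section NonnegativeDeterminant

lemma detPairing_im_eq_zero {X Y : Matrix (Fin 2) (Fin 2) ℂ} (hX : 0 ≤ X.det) (hY : 0 ≤ Y.det)
    (hXY : 0 ≤ (X + Y).det) : (detPairing X Y).im = 0 := by
  rw [Complex.nonneg_iff] at hX hY hXY
  have h := congrArg Complex.im (det_add_eq_detPairing X Y)
  simp only [Complex.add_im, Complex.mul_im, Complex.re_ofNat, Complex.im_ofNat, zero_mul,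
    add_zero] at h
  linarith

lemma gram_real_posSemidef_iff_det_nonneg {ι : Type*} [Fintype ι]
    (P : ι → Matrix (Fin 2) (Fin 2) ℂ) :
    ((∀ i j, (detPairing (P i) (P j)).im = 0) ∧
        ∀ v : ι → ℝ, 0 ≤ ∑ i, ∑ j, v i * (detPairing (P i) (P j)).re * v j) ↔
      ∀ X ∈ Submodule.span ℝ (Set.range P), 0 ≤ X.det := by
  have hdet (him : ∀ i j, (detPairing (P i) (P j)).im = 0) (v : ι → ℝ) : (∑ i, v i • P i).det =
      ((∑ i, ∑ j, v i * (detPairing (P i) (P j)).re * v j : ℝ) : ℂ) := by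
    have hcoe (i j : ι) : ((detPairing (P i) (P j)).re : ℂ) = detPairing (P i) (P j) :=
      Complex.ext rfl (him i j).symm
    simp only [← Complex.coe_smul, det_sum_smul, Complex.ofReal_sum, Complex.ofReal_mul, hcoe]
  constructor
  · rintro ⟨him, hpos⟩ X hX
    obtain ⟨v, rfl⟩ := (Submodule.mem_span_range_iff_exists_fun ℝ).mp hX
    rw [hdet him, Complex.zero_le_real]
    exact hpos v
  · intro hspan
    have hP (i : ι) : P i ∈ Submodule.span ℝ (Set.range P) := Submodule.subset_span ⟨i, rfl⟩
    have him (i j : ι) : (detPairing (P i) (P j)).im = 0 :=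
      detPairing_im_eq_zero (hspan _ (hP i)) (hspan _ (hP j)) (hspan _ (add_mem (hP i) (hP j)))
    refine ⟨him, fun v => ?_⟩
    rw [← Complex.zero_le_real, ← hdet him]
    exact hspan _ ((Submodule.mem_span_range_iff_exists_fun ℝ).mpr ⟨v, rfl⟩)

variable {W : Submodule ℝ (Matrix (Fin 2) (Fin 2) ℂ)} {X Y : Matrix (Fin 2) (Fin 2) ℂ}

lemma detPairing_eq_zero_of_det_eq_zero (hW : ∀ X ∈ W, 0 ≤ X.det) (hX : X ∈ W) (hY : Y ∈ W)
    (hdet : X.det = 0) : detPairing X Y = 0 := by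
  have him := detPairing_im_eq_zero (hW X hX) (hW Y hY) (hW _ (add_mem hX hY))
  refine Complex.ext ?_ him
  by_contra hne
  have hline (t : ℝ) : 0 ≤ 2 * t * (detPairing X Y).re + Y.det.re := by
    have h := (Complex.nonneg_iff.mp (hW _ (add_mem (W.smul_mem t hX) hY))).1
    rw [det_add_eq_detPairing, ← detPairing_self (t • X)] at h
    simpa [LinearMap.map_smul_of_tower, detPairing_self, hdet, mul_assoc] using h
  have h := hline (-(Y.det.re + 1) / (2 * (detPairing X Y).re))
  rw [mul_right_comm, mul_div_cancel₀ _ (mul_ne_zero two_ne_zero hne)] at h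
  linarith

/-- A set `S` of `2 × 2` matrices acts irreducibly on `K²`: no line is preserved by all of `S`. -/
def ActsIrreducibly {K : Type*} [Field K] (S : Set (Matrix (Fin 2) (Fin 2) K)) : Prop :=
  ∀ v : Fin 2 → K, v ≠ 0 → ¬ S ⊆ eigenvectorSubalgebra v

lemma eq_zero_of_det_eq_zero (hW : ∀ X ∈ W, 0 ≤ X.det) (hone : 1 ∈ W)
    (hirr : ActsIrreducibly (W : Set (Matrix (Fin 2) (Fin 2) ℂ))) (hX : X ∈ W) (hdet : X.det = 0) :
    X = 0 := by
  by_contra hne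
  obtain ⟨v, hv, hY⟩ := exists_common_eigenvector_of_isotropic hne hdet
    (detPairing_eq_zero_of_det_eq_zero hW hX hone hdet)
  exact hirr v hv fun Y hYW => hY Y (detPairing_eq_zero_of_det_eq_zero hW hX hYW hdet)

lemma ActsIrreducibly.not_le_span (hirr : ActsIrreducibly (W : Set (Matrix (Fin 2) (Fin 2) ℂ)))
    {S : Set (Matrix (Fin 2) (Fin 2) ℂ)} {v : Fin 2 → ℂ} (hv : v ≠ 0)
    (hS : S ⊆ eigenvectorSubalgebra v) : ¬ W ≤ Submodule.span ℝ S := fun hle =>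
  hirr v hv fun _ hX =>
    Submodule.span_le (p := (eigenvectorSubalgebra v).toSubmodule.restrictScalars ℝ).mpr hS (hle hX)

variable {κ : Type*} [Finite κ] [DecidableEq κ] {e : κ → Matrix (Fin 2) (Fin 2) ℂ}

lemma exists_orthogonal_residual (hW : ∀ X ∈ W, 0 ≤ X.det) (he : ∀ i, e i ∈ W)
    (hon : ∀ i j, detPairing (e i) (e j) = if i = j then 1 else 0) (hX : X ∈ W) :
    ∃ Y ∈ W, X - Y ∈ Submodule.span ℝ (Set.range e) ∧ ∀ j, detPairing Y (e j) = 0 := by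
  cases nonempty_fintype κ
  have hcoe (j : κ) : ((detPairing X (e j)).re : ℂ) = detPairing X (e j) :=
    Complex.ext rfl
      (detPairing_im_eq_zero (hW X hX) (hW _ (he j)) (hW _ (add_mem hX (he j)))).symm
  refine ⟨X - ∑ i, (detPairing X (e i)).re • e i,
    sub_mem hX (sum_mem fun i _ => W.smul_mem _ (he i)), ?_, fun j => ?_⟩
  · rw [sub_sub_cancel]
    exact sum_mem fun i _ => Submodule.smul_mem _ _ (Submodule.subset_span ⟨i, rfl⟩)
  · simp [LinearMap.map_smul_of_tower, hon, hcoe]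

lemma exists_det_smul_eq_one (hdet : 0 < Y.det) : ∃ c : ℝ, (c • Y).det = 1 := by
  obtain ⟨d, hd, hYd⟩ : ∃ d : ℝ, 0 < d ∧ Y.det = d :=
    ⟨Y.det.re, (Complex.pos_iff.mp hdet).1, Complex.ext rfl (Complex.pos_iff.mp hdet).2.symm⟩
  refine ⟨(√d)⁻¹, ?_⟩
  rw [← Complex.coe_smul, det_smul, hYd, Fintype.card_fin, ← Complex.ofReal_pow, inv_pow,
    Real.sq_sqrt hd.le, ← Complex.ofReal_mul, inv_mul_cancel₀ hd.ne', Complex.ofReal_one]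

lemma exists_unit_orthogonal (hW : ∀ X ∈ W, 0 ≤ X.det) (haniso : ∀ X ∈ W, X.det = 0 → X = 0)
    (he : ∀ i, e i ∈ W) (hon : ∀ i j, detPairing (e i) (e j) = if i = j then 1 else 0)
    (hspan : ¬ W ≤ Submodule.span ℝ (Set.range e)) :
    ∃ A ∈ W, A.det = 1 ∧ ∀ j, detPairing A (e j) = 0 := by
  obtain ⟨X, hX, hXspan⟩ := SetLike.not_le_iff_exists.mp hspan
  obtain ⟨Y, hY, hXY, horth⟩ := exists_orthogonal_residual hW he hon hX
  have hne : Y ≠ 0 := by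
    rintro rfl
    exact hXspan (by simpa using hXY)
  obtain ⟨c, hc⟩ := exists_det_smul_eq_one
    ((hW Y hY).lt_of_ne fun h => hne (haniso Y hY h.symm))
  exact ⟨c • Y, W.smul_mem c hY, hc, fun j => by simp [LinearMap.map_smul_of_tower, horth]⟩

lemma exists_orthonormal_triple (hW : ∀ X ∈ W, 0 ≤ X.det) (hone : 1 ∈ W)
    (hirr : ActsIrreducibly (W : Set (Matrix (Fin 2) (Fin 2) ℂ))) :
    ∃ A ∈ W, ∃ B ∈ W, ∀ i j, detPairing (![1, A, B] i) (![1, A, B] j) = if i = j then 1 else 0 := by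
  have haniso : ∀ X ∈ W, X.det = 0 → X = 0 := fun X => eq_zero_of_det_eq_zero hW hone hirr
  obtain ⟨A, hA, hAdet, hAorth⟩ := exists_unit_orthogonal (e := ![1]) hW haniso (by simpa)
    (by simp [detPairing_self]) (hirr.not_le_span (v := 1) one_ne_zero (by simp))
  have hA₁ : detPairing A 1 = 0 := hAorth 0
  obtain ⟨v, hv, hAv⟩ := exists_mulVec_eq_I_smul hA₁ hAdet
  obtain ⟨B, hB, hBdet, hBorth⟩ := exists_unit_orthogonal (e := ![1, A]) hW haniso
    (by simp [Fin.forall_fin_two, hone, hA])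
    (by simp [Fin.forall_fin_two, detPairing_self, hAdet, hA₁, detPairing_comm 1])
    (hirr.not_le_span hv (by
      rintro _ ⟨i, rfl⟩
      fin_cases i
      exacts [one_mem _, ⟨Complex.I, hAv⟩]))
  have hB₁ : detPairing B 1 = 0 := hBorth 0
  have hBA : detPairing B A = 0 := hBorth 1
  refine ⟨A, hA, B, hB, ?_⟩
  simp [Fin.forall_fin_succ, detPairing_self, hAdet, hBdet, hA₁, hB₁, hBA, detPairing_comm 1,
    detPairing_comm A B]

theorem exists_slConj_mem_quaternions (hW : ∀ X ∈ W, 0 ≤ X.det) (hone : 1 ∈ W)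
    (hirr : ActsIrreducibly (W : Set (Matrix (Fin 2) (Fin 2) ℂ))) :
    ∃ C : SL(2, ℂ), ∀ X ∈ W, slConj C X ∈ quaternions := by
  obtain ⟨A, hA, B, hB, hon⟩ := exists_orthonormal_triple hW hone hirr
  obtain ⟨C, hCA, hCB⟩ : ∃ C : SL(2, ℂ), slConj C A = quaternionI ∧ slConj C B = quaternionJ :=
    exists_slConj_eq_quaternionI_quaternionJ (hon 1 0) (hon 2 0) (hon 1 2)
      (detPairing_self A ▸ hon 1 1) (detPairing_self B ▸ hon 2 2)
  refine ⟨C, fun X hX => ?_⟩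
  obtain ⟨Y, hY, hXY, horth⟩ := exists_orthogonal_residual hW
    (by simp [Fin.forall_fin_succ, hone, hA, hB]) hon hX
  have hproj : slConj C (X - Y) ∈ quaternions := by
    refine Submodule.span_le
      (p := quaternions.toSubmodule.comap ((slConj C).restrictScalars ℝ)).mpr ?_ hXY
    simp [Set.insert_subset_iff, slConj_one, hCA, hCB, one_mem, quaternionI_mem, quaternionJ_mem]
  have hres : slConj C Y ∈ quaternions := by
    refine mem_quaternions_of_orthogonal ?_ ?_ ?_ (det_slConj C Y ▸ hW Y hY)
    · rw [← slConj_one C, detPairing_slConj]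
      exact horth 0
    · rw [← hCA, detPairing_slConj]
      exact horth 1
    · rw [← hCB, detPairing_slConj]
      exact horth 2
  simpa using add_mem hproj hres

end NonnegativeDeterminant

section Generators

variable {S : Set SL(2, ℂ)}

lemma actsIrreducibly_of_closure
    (hirr : ¬ ∃ v : Fin 2 → ℂ, v ≠ 0 ∧ ∀ g ∈ Subgroup.closure S,
      ∃ μ : ℂ, (g : Matrix (Fin 2) (Fin 2) ℂ) *ᵥ v = μ • v) :
    ActsIrreducibly ((↑) '' S : Set (Matrix (Fin 2) (Fin 2) ℂ)) := by
  intro v hv hS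
  let stabilizer := specialLinearSubgroup (eigenvectorSubalgebra v)
    fun _ => adjugate_mem_eigenvectorSubalgebra
  have hle : Subgroup.closure S ≤ stabilizer :=
    (Subgroup.closure_le _).mpr fun g hg => hS ⟨g, hg, rfl⟩
  exact hirr ⟨v, hv, fun g hg => hle hg⟩

lemma conj_closure_subset_unitaryGroup_iff (C : SL(2, ℂ)) :
    (∀ g ∈ Subgroup.closure S,
        ((C * g * C⁻¹ : SL(2, ℂ)) : Matrix (Fin 2) (Fin 2) ℂ) ∈ unitaryGroup (Fin 2) ℂ) ↔
      ∀ X ∈ Submodule.span ℝ (insert 1 ((↑) '' S : Set (Matrix (Fin 2) (Fin 2) ℂ))),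
        slConj C X ∈ quaternions := by
  simp only [coe_mem_unitaryGroup_iff_mem_quaternions]
  let SU₂ := specialLinearSubgroup quaternions fun _ => adjugate_mem_quaternions
  constructor
  · intro h
    refine Submodule.span_le
      (p := quaternions.toSubmodule.comap ((slConj C).restrictScalars ℝ)).mpr ?_
    rintro _ (rfl | ⟨g, hg, rfl⟩)
    · exact (congrArg (· ∈ quaternions) (slConj_one C)).mpr (one_mem _)
    · exact h g (Subgroup.subset_closure hg)
  · intro h
    refine (Subgroup.closure_le (SU₂.comap (MulAut.conj C).toMonoidHom)).mpr fun g hg => ?_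
    exact h _ (Submodule.subset_span (Set.mem_insert_of_mem _ ⟨g, hg, rfl⟩))

theorem stmt11_general {ι : Type*} [Fintype ι] {P : ι → Matrix (Fin 2) (Fin 2) ℂ}
    (hP : Set.range P = insert 1 ((↑) '' S))
    (hirr : ¬ ∃ v : Fin 2 → ℂ, v ≠ 0 ∧ ∀ g ∈ Subgroup.closure S,
      ∃ μ : ℂ, (g : Matrix (Fin 2) (Fin 2) ℂ) *ᵥ v = μ • v) :
    (∃ C : SL(2, ℂ), ∀ g ∈ Subgroup.closure S,
        ((C * g * C⁻¹ : SL(2, ℂ)) : Matrix (Fin 2) (Fin 2) ℂ) ∈ unitaryGroup (Fin 2) ℂ) ↔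
      (∀ i j, (detPairing (P i) (P j)).im = 0) ∧
        ∀ v : ι → ℝ, 0 ≤ ∑ i, ∑ j, v i * (detPairing (P i) (P j)).re * v j := by
  simp only [conj_closure_subset_unitaryGroup_iff]
  rw [gram_real_posSemidef_iff_det_nonneg, hP]
  constructor
  · rintro ⟨C, hC⟩ X hX
    exact det_slConj C X ▸ det_nonneg_of_mem_quaternions (hC X hX)
  · intro hdet
    have hsub := Submodule.subset_span (R := ℝ)
      (s := insert 1 ((↑) '' S : Set (Matrix (Fin 2) (Fin 2) ℂ)))
    exact exists_slConj_mem_quaternions hdet (hsub (Set.mem_insert _ _)) fun v hv hv' =>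
      actsIrreducibly_of_closure hirr v hv ((Set.subset_insert _ _).trans (hsub.trans hv'))

end Generators

theorem stmt11 (P₁ P₂ P₃ : Matrix.SpecialLinearGroup (Fin 2) ℂ)
    (hirr : ¬ ∃ ℓ : Fin 2 → ℂ, ℓ ≠ 0 ∧
        ∀ g ∈ Subgroup.closure {P₁, P₂, P₃},
          ∃ μ : ℂ, (g : Matrix (Fin 2) (Fin 2) ℂ).mulVec ℓ = μ • ℓ)
    (T : Matrix (Fin 4) (Fin 4) ℂ)
    (hT : T = Matrix.of fun i j : Fin 4 =>
        (1/2 : ℂ) *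
          (((![1, ↑P₁, ↑P₂, ↑P₃] : Fin 4 → Matrix (Fin 2) (Fin 2) ℂ) i) *
           ((![1, ↑P₁, ↑P₂, ↑P₃] : Fin 4 → Matrix (Fin 2) (Fin 2) ℂ) j).adjugate).trace) :
    (∃ C : Matrix.SpecialLinearGroup (Fin 2) ℂ,
        ∀ g ∈ Subgroup.closure {P₁, P₂, P₃},
          ((C * g * C⁻¹ : Matrix.SpecialLinearGroup (Fin 2) ℂ) : Matrix (Fin 2) (Fin 2) ℂ) ∈
            Matrix.unitaryGroup (Fin 2) ℂ) ↔
      ((∀ i j, (T i j).im = 0) ∧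
        ∀ v : Fin 4 → ℝ, 0 ≤ ∑ i, ∑ j, v i * (T i j).re * v j) := by
  subst hT
  exact stmt11_general (by grind [range_cons, range_empty]) hirr
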